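/- Fix integers k ≥ 2, ℓ ≥ 1, n ≥ 2, d ≥ 1. Let L be a list of n vectors in {0,1}^d, and let v_1, …, v_k ∈ {0,1}^d. For j ∈ [0..n^ℓ−1] with base-n digits j_1, …, j_ℓ, define List(L)_ℓ[j] ∈ {0,1}^d by List(L)_ℓ[j][h] = L[j_1][h] · L[j_2][h] ⋯ L[j_ℓ][h]. For i ∈ [1..k−1], define the 0/1 sequence VecS_i of length d·n^ℓ by VecS_i[(h−1)n^ℓ + j + 1] = List(L)_ℓ[j][h] · v_i[h] for h ∈ [1..d], j ∈ [0..n^ℓ−1]; and define the 0/1 sequence Vec_E of length (d−1)n^ℓ + 1 by Vec_E[(h−1)n^ℓ + 1] = v_k[h] for h ∈ [1..d] and Vec_E[p] = 0 at all other positions p. Suppose that for each i ∈ [1..k] and b ∈ {0,1} we are given a string CG_i(b), all of one common length c over an alphabet Σ_0, and an integer z, such that for all bits b_1, …, b_k ∈ {0,1}: LCS(CG_1(b_1), …, CG_k(b_k)) = z+1 if b_1·b_2 ⋯ b_k = 0 and = z if b_1·b_2 ⋯ b_k = 1. Form the lists X_i = (CG_i(VecS_i[j]))_{j=1}^{d·n^ℓ}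 for i ∈ [1..k−1] and Y = (CG_k(Vec_E[j]))_{j=1}^{(d−1)n^ℓ+1}, and let IVG_i = SAG_i(X_i) and EIVG = SAG_y(Y), where SAG_i, SAG_y are the selected alignment gadgets built from these lists with fresh symbols $_1, …, $_k, %, @ not in Σ_0 (with parameters ℓ_str = c, n_str = d·n^ℓ, m_str = (d−1)n^ℓ+1, and D = 2c(2((d−1)n^ℓ+1) + (k−1)d·n^ℓ) + (z+1)((d−1)n^ℓ+1)). Let C = D. If there exist j_1, …, j_{k−1} ∈ [0..n^ℓ−1] such that for every h ∈ [1..d]: v_k[h] · Π_{i=1}^{k−1}(List(L)_ℓ[j_i][h] · v_i[h]) = 0, then LCS(IVG_1, …, IVG_{k−1}, EIVG) = C; otherwise LCS(IVG_1, …, IVG_{k−1}, EIVG) = C − 1. -/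

import Mathlib

/-- The length of a longest common subsequence of a family of strings. -/
noncomputable def lcsLen {α : Type*} (L : List (List α)) : ℕ :=
  sSup { m : ℕ | ∃ T : List α, T.length = m ∧ ∀ s ∈ L, T.Sublist s }

/-- `strPow W f` is the concatenation `W^f` of `f` copies of the string `W`. -/
def strPow {β : Type*} (W : List β) (f : ℕ) : List β :=
  (List.replicate f W).flatten

/-- The string `A = $₁^{2ℓ} · $₂^{2ℓ} ⋯ $_k^{2ℓ}`. -/
def gadgetA {β : Type*} (k ℓ : ℕ) (dollar : Fin k → β) : List β :=
  (List.ofFn fun j : Fin k => List.replicate (2 * ℓ) (dollar j)).flatten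

/-- The string `A₋ᵢ`: `A` with the block `$ᵢ^{2ℓ}` removed. -/
def gadgetAminus {β : Type*} (k ℓ : ℕ) (dollar : Fin k → β) (i : Fin k) : List β :=
  (List.ofFn fun j : Fin k =>
    if j = i then [] else List.replicate (2 * ℓ) (dollar j)).flatten

/-- The alignment gadget
`AG_i(X) = A₋ᵢ^f · (A · X[1] · B) · (A · X[2] · B) ⋯ (A · X[n] · B) · A₋ᵢ^f`
where `B = %^{2ℓ}`. -/
def gadgetAG {β : Type*} (k ℓ : ℕ) (dollar : Fin k → β) (percent : β)
    (i : Fin k) (f : ℕ) {n : ℕ} (X : Fin n → List β) : List β :=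
  strPow (gadgetAminus k ℓ dollar i) f ++
    (List.ofFn fun j : Fin n =>
      gadgetA k ℓ dollar ++ X j ++ List.replicate (2 * ℓ) percent).flatten ++
    strPow (gadgetAminus k ℓ dollar i) f

/-- The selected alignment gadget `SAG_i(X) = @^{D−1} · AG_i(X)`. -/
def gadgetSAGx {β : Type*} (k ℓ : ℕ) (dollar : Fin k → β) (percent atSym : β)
    (D : ℕ) (i : Fin k) (f : ℕ) {n : ℕ} (X : Fin n → List β) : List β :=
  List.replicate (D - 1) atSym ++ gadgetAG k ℓ dollar percent i f X

/-- The selected alignment gadget `SAG_y(Y) = AG_y(Y) · @^{D−1}`. -/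
def gadgetSAGy {β : Type*} (k ℓ : ℕ) (dollar : Fin k → β) (percent atSym : β)
    (D : ℕ) (i : Fin k) (f : ℕ) {m : ℕ} (Y : Fin m → List β) : List β :=
  gadgetAG k ℓ dollar percent i f Y ++ List.replicate (D - 1) atSym


/-- `listLProd n d ℓ hn L j h` is the `h`-th coordinate of the vector `List(L)_ℓ[j]`:
the product (conjunction) `L[j₁][h] ⋯ L[j_ℓ][h]` over the base-`n` digits `j₁, …, j_ℓ`
of `j`. -/
def listLProd (n d ℓ : ℕ) (hn : 0 < n) (L : Fin n → Fin d → Bool)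
    (j : ℕ) (h : Fin d) : Bool :=
  decide (∀ x < ℓ, L ⟨j / n ^ x % n, Nat.mod_lt _ hn⟩ h = true)

/-- The 0/1 sequence `VecS_i` (0-indexed): at position `p = (h−1)·n^ℓ + j` its value is
`List(L)_ℓ[j][h] · vᵢ[h]`. -/
def vecS (n d ℓ : ℕ) (hn : 0 < n) (L : Fin n → Fin d → Bool)
    (vi : Fin d → Bool) (p : ℕ) : Bool :=
  if h : p / n ^ ℓ < d then
    listLProd n d ℓ hn L (p % n ^ ℓ) ⟨p / n ^ ℓ, h⟩ && vi ⟨p / n ^ ℓ, h⟩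
  else false

/-- The 0/1 sequence `Vec_E` (0-indexed): at position `p = (h−1)·n^ℓ` its value is `v_k[h]`,
and it is `0` at all other positions. -/
def vecE (n d ℓ : ℕ) (vk : Fin d → Bool) (p : ℕ) : Bool :=
  if h : p / n ^ ℓ < d then
    (if p % n ^ ℓ = 0 then vk ⟨p / n ^ ℓ, h⟩ else false)
  else false

/-!
Delete from `AG_i` every delimiter except `$_i`: what remains is `$_i^{2c} · X_i[1] · % ⋯`, a run of
`$_i` in front of every block, and both copies of `A_{-i}^f` vanish. A common subsequence splits
along the blocks of `Y`. If the piece from some `Y[p]` fits into no block of `X_i`, its match in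
`AG_i` crosses a whole run `$_i^{2c}`; losing these `2c` symbols is worse than anything that the
piece, of length at most `c`, can gain. Hence `LCS(AG_1, …, AG_y) ≤ D`, and a common subsequence of
length `D` uses every delimiter `$_i` of every `AG_i`. Rigidity follows: consecutive blocks of `Y`
are matched to consecutive blocks of each `X_i`, beginning at some offset `s_i ≤ f`, and all of the
pieces are optimal. Conversely such offsets yield length `D`, since the `f` unused blocks of `X_i`
pair up with the `f` copies of `A_{-i}` on either side of the other gadgets.

The runs of `@`, placed at opposite ends, guarantee `D - 1` and cannot be combined with anything
else. Finally `f = n^ℓ - 1`, so an offset is an index `j_i < n^ℓ`, and at this offset position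
`h n^ℓ` of `Vec_E` faces coordinate `h` of `List(L)_ℓ[j_i]`.
-/

open scoped List

section LongestCommonSubsequence

variable {β : Type*}

theorem le_lcsLen_iff {L : List (List β)} (hL : L ≠ []) {m : ℕ} :
    m ≤ lcsLen L ↔ ∃ T : List β, T.length = m ∧ ∀ s ∈ L, T <+ s := by
  obtain ⟨s₀, hs₀⟩ := List.exists_mem_of_ne_nil L hL
  have hbdd : BddAbove {m : ℕ | ∃ T : List β, T.length = m ∧ ∀ s ∈ L, T <+ s} :=
    ⟨s₀.length, by rintro _ ⟨T, rfl, hT⟩; exact (hT s₀ hs₀).length_le⟩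
  constructor
  · intro hm
    have hne : {m : ℕ | ∃ T : List β, T.length = m ∧ ∀ s ∈ L, T <+ s}.Nonempty :=
      ⟨0, [], rfl, fun s _ => List.nil_sublist s⟩
    obtain ⟨T, hlen, hT⟩ := Nat.sSup_mem hne hbdd
    exact ⟨T.take m, List.length_take_of_le (hlen ▸ hm),
      fun s hs => (List.take_sublist m T).trans (hT s hs)⟩
  · rintro ⟨T, hlen, hT⟩
    exact le_csSup hbdd ⟨T, hlen, hT⟩

theorem le_lcsLen_ofFn_append_singleton_iff {K : ℕ} {F : Fin K → List β} {y : List β} {m : ℕ} :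
    m ≤ lcsLen (List.ofFn F ++ [y]) ↔ ∃ T : List β, T.length = m ∧ (∀ i, T <+ F i) ∧ T <+ y := by
  simp [le_lcsLen_iff, or_imp, forall_and]

/-- If `T` contains `a`, its first `a` must be matched inside the block of `a`s that ends
`y · a^n`, while everything before it is matched inside the block that starts `a^n · F i`. -/
theorem lcsLen_replicate_append {K : ℕ} (hK : 0 < K) {F : Fin K → List β} {y : List β} {a : β}
    (hF : ∀ i, a ∉ F i) (hy : a ∉ y) (n : ℕ) :
    lcsLen (List.ofFn (fun i => List.replicate n a ++ F i) ++ [y ++ List.replicate n a]) =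
      max n (lcsLen (List.ofFn F ++ [y])) := by
  refine eq_of_forall_le_iff fun m => ?_
  rw [le_max_iff, le_lcsLen_ofFn_append_singleton_iff, le_lcsLen_ofFn_append_singleton_iff]
  constructor
  · rintro ⟨T, rfl, hTF, hTy⟩
    by_cases haT : a ∈ T
    · left
      obtain ⟨T₁, T₂, rfl, hT₁, hT₂⟩ := List.sublist_append_iff.1 hTy
      obtain ⟨_ | ⟨b, T₃⟩, T₄, hT, hT₃, hT₄⟩ := List.sublist_append_iff.1 (hTF ⟨0, hK⟩)
      · exact absurd (hT₄.subset (by simpa [hT] using haT)) (hF _)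
      · obtain rfl : b = a := List.eq_of_mem_replicate (hT₃.subset List.mem_cons_self)
        cases T₁ with
        | nil => simpa using hT₂.length_le
        | cons c T₁ =>
          obtain ⟨rfl, -⟩ := List.cons.inj hT
          exact absurd (hT₁.subset List.mem_cons_self) hy
    · right
      have hdisj : T.Disjoint (List.replicate n a) :=
        fun b hb hb' => haT (List.eq_of_mem_replicate hb' ▸ hb)
      exact ⟨T, rfl, fun i => .of_sublist_append_right hdisj (hTF i),
        .of_sublist_append_left hdisj hTy⟩
  · rintro (hm | ⟨T, hlen, hTF, hTy⟩)
    · have hrep : List.replicate m a <+ List.replicate n a :=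
        (List.replicate_sublist_replicate a).2 hm
      exact ⟨_, List.length_replicate, fun i => hrep.trans (List.sublist_append_left _ _),
        hrep.trans (List.sublist_append_right _ _)⟩
    · exact ⟨T, hlen, fun i => (hTF i).trans (List.sublist_append_right _ _),
        hTy.trans (List.sublist_append_left _ _)⟩

end LongestCommonSubsequence

section DelimitedBlocks

variable {β : Type*} {x : β} {m N : ℕ} {Z : ℕ → List β}

/-- The string `x^m · Z 0 · x^m · Z 1 ⋯ x^m · Z (N - 1)`. Deleting from an alignment gadget all
delimiters `$_j` except one leaves a string of this shape. -/
def delimitedBlocks {β : Type*} (x : β) (m : ℕ) (Z : ℕ → List β) (N : ℕ) : List β :=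
  (List.range N).flatMap fun q => List.replicate m x ++ Z q

theorem delimitedBlocks_succ (x : β) (m : ℕ) (Z : ℕ → List β) (N : ℕ) :
    delimitedBlocks x m Z (N + 1) =
      (List.replicate m x ++ Z 0) ++ delimitedBlocks x m (fun q => Z (q + 1)) N := by
  simp [delimitedBlocks, List.range_succ_eq_map, List.flatMap_map]

theorem disjoint_of_forall_eq {t l : List β} (ht : x ∉ t) (hl : ∀ b ∈ l, b = x) : t.Disjoint l :=
  fun b hb hb' => ht (hl b hb' ▸ hb)

theorem sublist_of_sublist_replicate_append {t W : List β} (ht : x ∉ t)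
    (h : t <+ List.replicate m x ++ W) : t <+ W :=
  .of_sublist_append_right (disjoint_of_forall_eq ht fun _ => List.eq_of_mem_replicate) h

variable [DecidableEq β]

theorem count_delimitedBlocks (hZ : ∀ q, x ∉ Z q) : (delimitedBlocks x m Z N).count x = m * N := by
  induction N generalizing Z with
  | zero => simp [delimitedBlocks]
  | succ N ih =>
    rw [delimitedBlocks_succ, List.count_append, List.count_append, List.count_replicate_self,
      List.count_eq_zero_of_not_mem (hZ 0), ih fun q => hZ (q + 1)]
    ring

theorem eq_of_mem_of_prefix_replicate_append {l Z : List β} (h : l <+: List.replicate m x ++ Z)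
    (hl : l.count x < m) : ∀ b ∈ l, b = x := by
  intro b hb
  have hx := List.prefix_append (List.replicate m x) Z
  rcases le_total l.length (List.replicate m x).length with hle | hle
  · exact List.eq_of_mem_replicate ((List.prefix_of_prefix_length_le h hx hle).subset hb)
  · have := (List.prefix_of_prefix_length_le hx h hle).sublist.count_le x
    rw [List.count_replicate_self] at this
    omega

theorem eq_of_mem_of_prefix_delimitedBlocks {l : List β} (h : l <+: delimitedBlocks x m Z N)
    (hl : l.count x < m) : ∀ b ∈ l, b = x := by
  cases N with
  | zero => simp [List.prefix_nil.1 h]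
  | succ N =>
    rw [delimitedBlocks_succ, List.append_assoc] at h
    exact eq_of_mem_of_prefix_replicate_append h hl

/-- A factor `r` with fewer than `m` delimiters can meet at most one delimiter run `x^m` next to
material of the blocks, so its `x`-free subsequences come from a single block `Z q`. -/
theorem exists_sublist_block_of_count_lt (hZ : ∀ q, x ∉ Z q) {u r t : List β}
    (h : u ++ r <+: delimitedBlocks x m Z N) (hr : r.count x < m) (htr : t <+ r) (ht : x ∉ t)
    (htne : t ≠ []) :
    ∃ q < N, t <+ Z q ∧ u.count x ≤ m * (q + 1) ∧ m * (q + 1) ≤ u.count x + r.count x := by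
  induction N generalizing Z u r with
  | zero => simp_all [delimitedBlocks]
  | succ N ih =>
    obtain ⟨b, hb⟩ := List.exists_mem_of_ne_nil t htne
    have hbx : b ≠ x := fun hbx => ht (hbx ▸ hb)
    have hcount : (List.replicate m x ++ Z 0).count x = m := by
      simp [List.count_eq_zero_of_not_mem (hZ 0)]
    rw [delimitedBlocks_succ] at h
    have hfirst := List.prefix_append (List.replicate m x ++ Z 0)
      (delimitedBlocks x m (fun q => Z (q + 1)) N)
    rcases le_total (u ++ r).length (List.replicate m x ++ Z 0).length with hlen | hlen
    · have hpre := List.prefix_of_prefix_length_le h hfirst hlen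
      have hle : u.count x + r.count x ≤ m := by
        simpa only [hcount, List.count_append] using hpre.sublist.count_le x
      refine ⟨0, by omega, ?_, by omega, ?_⟩
      · exact sublist_of_sublist_replicate_append ht
          (htr.trans ((List.sublist_append_right u r).trans hpre.sublist))
      · by_contra! hlt
        rw [← List.count_append, zero_add, mul_one] at hlt
        exact hbx (eq_of_mem_of_prefix_replicate_append hpre hlt b
          (List.mem_append_right u (htr.subset hb)))
    · obtain ⟨s, hs⟩ := List.prefix_of_prefix_length_le hfirst h hlen
      rw [← hs, List.prefix_append_right_inj] at h
      rcases List.append_eq_append_iff.1 hs with ⟨u', rfl, rfl⟩ | ⟨u', hu', rfl⟩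
      · obtain ⟨q, hq, hsub, hlo, hhi⟩ := ih (fun q => hZ (q + 1)) h hr htr
        refine ⟨q + 1, by omega, hsub, ?_, ?_⟩ <;>
          · rw [List.count_append, hcount]
            linarith
      · have hs : ∀ b ∈ s, b = x := by
          refine eq_of_mem_of_prefix_delimitedBlocks h (lt_of_le_of_lt ?_ hr)
          exact (List.sublist_append_right u' s).count_le x
        have htu' : t <+ u' := .of_sublist_append_left (disjoint_of_forall_eq ht hs) htr
        rw [hu', List.count_append] at hcount
        refine ⟨0, by omega, ?_, by omega, ?_⟩
        · exact sublist_of_sublist_replicate_append ht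
            (htu'.trans (hu' ▸ List.sublist_append_right u u'))
        · rw [List.count_append]
          omega

/-- A subsequence that uses every delimiter is rigid: the number of delimiters before an `x`-free
factor determines the block that the factor is matched to. -/
theorem exists_sublist_block_of_count_eq (hm : 0 < m) (hZ : ∀ q, x ∉ Z q) {u t w : List β}
    (h : u ++ t ++ w <+ delimitedBlocks x m Z N) (hcount : (u ++ t ++ w).count x = m * N)
    (ht : x ∉ t) (htne : t ≠ []) : ∃ q < N, t <+ Z q ∧ u.count x = m * (q + 1) := by
  obtain ⟨v, w', hvw, hv, hw⟩ := List.append_sublist_iff.1 h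
  obtain ⟨u', r, rfl, hu, hr⟩ := List.append_sublist_iff.1 hv
  have htotal := congrArg (List.count x) hvw
  rw [count_delimitedBlocks hZ, ← hcount] at htotal
  have hu' := hu.count_le x
  have hw' := hw.count_le x
  have ht' := List.count_eq_zero_of_not_mem ht
  simp only [List.count_append] at htotal
  obtain ⟨q, hq, hsub, hlo, hhi⟩ :=
    exists_sublist_block_of_count_lt hZ ⟨w', hvw.symm⟩ (by omega) hr ht htne
  exact ⟨q, hq, hsub, by omega⟩

end DelimitedBlocks

section BlockStrings

variable {β : Type*} {P S : List β} {a t b : ℕ → List β}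

/-- The string `P · (a 0 · t 0 · b 0) ⋯ (a (n - 1) · t (n - 1) · b (n - 1)) · S`, the common shape
of alignment gadgets and of their subsequences. -/
def blockString (P : List β) (a t b : ℕ → List β) (S : List β) (n : ℕ) : List β :=
  P ++ (List.range n).flatMap (fun p => a p ++ t p ++ b p) ++ S

theorem blockString_succ (P : List β) (a t b : ℕ → List β) (S : List β) (n : ℕ) :
    blockString P a t b S (n + 1) = blockString P a t b (a n) n ++ t n ++ (b n ++ S) := by
  simp [blockString, List.range_succ]

theorem exists_blockString_eq_append_of_lt (P : List β) (a t b : ℕ → List β) (S : List β)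
    {p n : ℕ} (hp : p < n) :
    ∃ w, blockString P a t b S n = blockString P a t b (a p) p ++ t p ++ w := by
  induction n generalizing S with
  | zero => omega
  | succ n ih =>
    rw [blockString_succ]
    rcases Nat.lt_succ_iff_lt_or_eq.1 hp with hp | rfl
    · obtain ⟨w, hw⟩ := ih (a n) hp
      exact ⟨w ++ t n ++ (b n ++ S), by rw [hw]; simp only [List.append_assoc]⟩
    · exact ⟨_, rfl⟩

theorem countP_blockString (f : β → Bool) (P : List β) (a t b : ℕ → List β) (S : List β) (n : ℕ) :
    (blockString P a t b S n).countP f = P.countP f +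
      ∑ p ∈ Finset.range n, ((a p).countP f + (t p).countP f + (b p).countP f) + S.countP f := by
  induction n generalizing S with
  | zero => simp [blockString]
  | succ n ih =>
    simp only [blockString_succ, List.countP_append, ih, Finset.sum_range_succ]
    ring

theorem filter_blockString (f : β → Bool) (P : List β) (a t b : ℕ → List β) (S : List β) (n : ℕ) :
    (blockString P a t b S n).filter f = blockString (P.filter f) (fun p => (a p).filter f)
      (fun p => (t p).filter f) (fun p => (b p).filter f) (S.filter f) n := by
  simp [blockString, List.filter_flatMap]

theorem exists_eq_flatMap_range_of_sublist {T : List β} {F : ℕ → List β} {n : ℕ}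
    (h : T <+ (List.range n).flatMap F) :
    ∃ G : ℕ → List β, (∀ p, G p <+ F p) ∧ T = (List.range n).flatMap G := by
  induction n generalizing T F with
  | zero => exact ⟨fun _ => [], fun p => List.nil_sublist _, by simpa using h⟩
  | succ n ih =>
    rw [List.range_succ_eq_map, List.flatMap_cons, List.flatMap_map] at h
    obtain ⟨T₀, T', rfl, h₀, h'⟩ := List.sublist_append_iff.1 h
    obtain ⟨G, hG, rfl⟩ := ih h'
    refine ⟨fun p => Nat.casesOn p T₀ G, fun p => ?_, ?_⟩
    · cases p with
      | zero => exact h₀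
      | succ p => exact hG p
    · rw [List.range_succ_eq_map, List.flatMap_cons, List.flatMap_map]
      rfl

theorem exists_eq_blockString_of_sublist {T : List β} {n : ℕ}
    (h : T <+ blockString P a t b S n) :
    ∃ P' a' t' b' S', T = blockString P' a' t' b' S' n ∧ P' <+ P ∧ (∀ p, a' p <+ a p) ∧
      (∀ p, t' p <+ t p) ∧ (∀ p, b' p <+ b p) ∧ S' <+ S := by
  obtain ⟨T', S', rfl, h', hS⟩ := List.sublist_append_iff.1 h
  obtain ⟨P', T', rfl, hP, h'⟩ := List.sublist_append_iff.1 h'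
  obtain ⟨G, hG, rfl⟩ := exists_eq_flatMap_range_of_sublist h'
  choose G' b' hG' hat hb using fun p => List.sublist_append_iff.1 (hG p)
  choose a' t' hat' ha ht using fun p => List.sublist_append_iff.1 (hat p)
  obtain rfl : G = fun p => a' p ++ t' p ++ b' p := funext fun p => by rw [hG', hat']
  exact ⟨P', a', t', b', S', rfl, hP, ha, ht, hb, hS⟩

theorem blockString_sublist_blockString {P' S' : List β} {a' t' b' : ℕ → List β} {n : ℕ}
    (hP : P' <+ P) (ha : ∀ p, a' p <+ a p) (ht : ∀ p, t' p <+ t p) (hb : ∀ p, b' p <+ b p)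
    (hS : S' <+ S) : blockString P' a' t' b' S' n <+ blockString P a t b S n :=
  (hP.append (List.Sublist.flatMap_right _ fun p _ =>
    ((ha p).append (ht p)).append (hb p))).append hS

variable [DecidableEq β] {x : β} {m M N : ℕ} {Z : ℕ → List β}

/-- A piece `t p` that embeds into no block has to skip a whole delimiter run. -/
theorem count_add_sum_le_of_blockString_sublist (hN : 0 < N) (hZ : ∀ q, x ∉ Z q)
    (ht : ∀ p, x ∉ t p) (h : blockString P a t b S M <+ delimitedBlocks x m Z N) :
    (blockString P a t b S M).count x +
      ∑ p ∈ Finset.range M, (if ∃ q < N, t p <+ Z q then 0 else m) ≤ m * N := by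
  suffices hcount_le : ∀ M S R, blockString P a t b S M <+ R → R <+: delimitedBlocks x m Z N →
      (blockString P a t b S M).count x +
        ∑ p ∈ Finset.range M, (if ∃ q < N, t p <+ Z q then 0 else m) ≤ R.count x by
    simpa only [count_delimitedBlocks hZ] using hcount_le M S _ h List.prefix_rfl
  intro M
  induction M with
  | zero => exact fun S R h _ => by simpa using h.count_le x
  | succ M ih =>
    intro S R h hR
    rw [blockString_succ] at h ⊢
    obtain ⟨R', R₃, rfl, h', h₃⟩ := List.append_sublist_iff.1 h
    obtain ⟨R₁, R₂, rfl, h₁, h₂⟩ := List.append_sublist_iff.1 h'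
    have hR₂ := (List.prefix_append (R₁ ++ R₂) R₃).trans hR
    have hle₁ := ih _ _ h₁ ((List.prefix_append R₁ R₂).trans hR₂)
    have hle₂ : (if ∃ q < N, t M <+ Z q then 0 else m) ≤ R₂.count x := by
      split_ifs with hq
      · exact Nat.zero_le _
      · by_contra! hlt
        by_cases hnil : t M = []
        · exact hq ⟨0, hN, hnil ▸ List.nil_sublist _⟩
        · obtain ⟨q, hqN, hsub, -⟩ :=
            exists_sublist_block_of_count_lt hZ hR₂ hlt h₂ (ht M) hnil
          exact hq ⟨q, hqN, hsub⟩
    have hle₃ := h₃.count_le x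
    simp only [List.count_append, List.count_eq_zero_of_not_mem (ht M), Finset.sum_range_succ]
      at hle₃ ⊢
    omega

theorem mem_separator_of_blockString_sublist (hm : 0 < m) (hZ : ∀ q, x ∉ Z q) (ht : ∀ p, x ∉ t p)
    (hb : ∀ p, x ∉ b p) (h : blockString P a t b S M <+ delimitedBlocks x m Z N)
    (hcount : (blockString P a t b S M).count x = m * N) {p : ℕ} (hp : p + 1 < M)
    (hbt : ∀ q, ¬ b p ++ t (p + 1) <+ Z q) : x ∈ a (p + 1) := by
  by_contra hxa
  obtain ⟨w, hw⟩ := exists_blockString_eq_append_of_lt P a t b S hp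
  have hfactor : blockString P a t b S M =
      (blockString P a t b (a p) p ++ t p) ++ (b p ++ a (p + 1) ++ t (p + 1)) ++ w := by
    simp only [hw, blockString_succ, List.append_assoc]
  have hsub : b p ++ t (p + 1) <+ b p ++ a (p + 1) ++ t (p + 1) :=
    (List.sublist_append_left _ _).append_right _
  have hne : b p ++ a (p + 1) ++ t (p + 1) ≠ [] := fun hnil =>
    hbt 0 ((hnil ▸ hsub).trans (List.nil_sublist _))
  rw [hfactor] at h hcount
  obtain ⟨q, -, hq, -⟩ := exists_sublist_block_of_count_eq hm hZ h hcount
    (by simp [hb, ht, hxa]) hne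
  exact hbt q (hsub.trans hq)

/-- Consecutive pieces are separated by at least one delimiter, because `b p · t (p + 1)` fits into
no block, and by at most one run of delimiters, because only `a (p + 1)` contains any. -/
theorem exists_shift_of_blockString_sublist (hm : 0 < m) (hZ : ∀ q, x ∉ Z q)
    (ht : ∀ p, x ∉ t p) (hb : ∀ p, x ∉ b p) (ha : ∀ p, (a p).count x ≤ m)
    (htne : ∀ p < M, t p ≠ []) (hbt : ∀ p q, p + 1 < M → ¬ b p ++ t (p + 1) <+ Z q)
    (h : blockString P a t b S M <+ delimitedBlocks x m Z N)
    (hcount : (blockString P a t b S M).count x = m * N) :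
    ∃ s, s + M ≤ N ∧ ∀ p < M, t p <+ Z (s + p) := by
  rcases M.eq_zero_or_pos with rfl | hM
  · exact ⟨0, by omega, by omega⟩
  have hpos : ∀ p < M, ∃ q < N, t p <+ Z q ∧
      (blockString P a t b (a p) p).count x = m * (q + 1) := by
    intro p hp
    obtain ⟨w, hw⟩ := exists_blockString_eq_append_of_lt P a t b S hp
    rw [hw] at h hcount
    exact exists_sublist_block_of_count_eq hm hZ h hcount (ht p) (htne p hp)
  choose! pos hlt hsub hpos using hpos
  have hstep : ∀ p, p + 1 < M → pos (p + 1) = pos p + 1 := by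
    intro p hp
    have hsep : 0 < (a (p + 1)).count x := List.count_pos_iff.2
      (mem_separator_of_blockString_sublist hm hZ ht hb h hcount hp fun q => hbt p q hp)
    have hsucc := hpos (p + 1) hp
    simp only [blockString_succ, List.count_append, hpos p (by omega),
      List.count_eq_zero_of_not_mem (ht p), List.count_eq_zero_of_not_mem (hb p)] at hsucc
    have hlo : m * (pos p + 1) < m * (pos (p + 1) + 1) := by omega
    have hhi : m * (pos (p + 1) + 1) ≤ m * (pos p + 1 + 1) := by linarith [ha (p + 1)]
    have := lt_of_mul_lt_mul_left' hlo
    have := le_of_mul_le_mul_left hhi hm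
    omega
  have hshift : ∀ p < M, pos p = pos 0 + p := by
    intro p hp
    induction p with
    | zero => rfl
    | succ p ih => rw [hstep p hp, ih (by omega), add_assoc]
  refine ⟨pos 0, ?_, fun p hp => hshift p hp ▸ hsub p hp⟩
  have hlast := hlt (M - 1) (by omega)
  rw [hshift (M - 1) (by omega)] at hlast
  omega

end BlockStrings

section AlignmentGadgets

variable {β : Type*} {k c : ℕ} {dollar : Fin k → β} {percent : β} {Sig : Set β}

/-- The symbols `$_1, …, $_k` and `%` are pairwise distinct and do not belong to `Sig`, the
alphabet of the strings that a gadget aligns. -/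
structure FreshSymbols {β : Type*} {k : ℕ} (Sig : Set β) (dollar : Fin k → β) (percent : β) :
    Prop where
  dollar_injective : Function.Injective dollar
  dollar_ne_percent : ∀ j, dollar j ≠ percent
  dollar_notMem : ∀ j, dollar j ∉ Sig
  percent_notMem : percent ∉ Sig

/-- The concatenation of the delimiter runs `$_j^{2c}` over `j ∈ J`, in increasing order of `j`.
It interpolates between `A`, the case of all `j`, and `A_{-i}`, the case of all `j ≠ i`. -/
def dollarWord {β : Type*} {k : ℕ} (c : ℕ) (dollar : Fin k → β) (J : Finset (Fin k)) : List β :=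
  (List.finRange k).flatMap fun j => if j ∈ J then List.replicate (2 * c) (dollar j) else []

theorem gadgetA_eq_dollarWord (k c : ℕ) (dollar : Fin k → β) :
    gadgetA k c dollar = dollarWord c dollar Finset.univ := by
  simp [gadgetA, dollarWord, List.ofFn_eq_map, List.flatMap_def]

theorem gadgetAminus_eq_dollarWord (k c : ℕ) (dollar : Fin k → β) (i : Fin k) :
    gadgetAminus k c dollar i = dollarWord c dollar {i}ᶜ := by
  simp [gadgetAminus, dollarWord, List.ofFn_eq_map, List.flatMap_def]

theorem strPow_eq_flatMap_range (W : List β) (f : ℕ) :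
    strPow W f = (List.range f).flatMap fun _ => W := by
  simp [strPow, List.flatMap_def, List.map_const']

theorem gadgetAG_eq_blockString (k c : ℕ) (dollar : Fin k → β) (percent : β) (i : Fin k) (f N : ℕ)
    (X : ℕ → List β) :
    gadgetAG k c dollar percent i f (fun p : Fin N => X p) =
      blockString (strPow (gadgetAminus k c dollar i) f) (fun _ => gadgetA k c dollar) X
        (fun _ => List.replicate (2 * c) percent) (strPow (gadgetAminus k c dollar i) f) N := by
  rw [gadgetAG, blockString, List.flatMap_def, ← List.map_coe_finRange_eq_range, List.map_map,
    List.ofFn_eq_map]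
  rfl

theorem length_dollarWord (c : ℕ) (dollar : Fin k → β) (J : Finset (Fin k)) :
    (dollarWord c dollar J).length = 2 * c * J.card := by
  simp [dollarWord, List.length_flatMap, apply_ite List.length, ← List.ofFn_eq_map,
    List.sum_ofFn, mul_comm]

theorem dollarWord_sublist_dollarWord {J J' : Finset (Fin k)} (h : J ⊆ J') :
    dollarWord c dollar J <+ dollarWord c dollar J' := by
  refine List.Sublist.flatMap_right _ fun j _ => ?_
  split_ifs with hJ hJ'
  · rfl
  · exact absurd (h hJ) hJ'
  · exact List.nil_sublist _
  · rfl

theorem mem_range_of_mem_dollarWord {J : Finset (Fin k)} {y : β} (hy : y ∈ dollarWord c dollar J) :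
    y ∈ Set.range dollar := by
  obtain ⟨j, -, hj⟩ := List.mem_flatMap.1 hy
  split_ifs at hj
  · exact ⟨j, (List.eq_of_mem_replicate hj).symm⟩
  · simp at hj

theorem mem_range_of_mem_gadgetA {y : β} (hy : y ∈ gadgetA k c dollar) : y ∈ Set.range dollar :=
  mem_range_of_mem_dollarWord (gadgetA_eq_dollarWord k c dollar ▸ hy)

theorem mem_range_of_mem_strPow_gadgetAminus {i : Fin k} {f : ℕ} {y : β}
    (hy : y ∈ strPow (gadgetAminus k c dollar i) f) : y ∈ Set.range dollar := by
  rw [strPow_eq_flatMap_range, gadgetAminus_eq_dollarWord] at hy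
  obtain ⟨_, -, hy⟩ := List.mem_flatMap.1 hy
  exact mem_range_of_mem_dollarWord hy

variable [DecidableEq β]

theorem count_dollarWord (hinj : Function.Injective dollar) (J : Finset (Fin k)) (i : Fin k) :
    (dollarWord c dollar J).count (dollar i) = if i ∈ J then 2 * c else 0 := by
  simp [dollarWord, List.count_flatMap, apply_ite, List.count_replicate, ← List.ofFn_eq_map,
    List.sum_ofFn, hinj.eq_iff, Function.comp_def]
  split_ifs with hi <;> simp [hi]

/-- The string `W` without the delimiters `$_j` for `j ≠ i`. -/
def keepDollar {β : Type*} [DecidableEq β] {k : ℕ} (dollar : Fin k → β) (i : Fin k)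
    (W : List β) : List β :=
  W.filter fun y => ∀ j, y = dollar j → j = i

theorem keepDollar_of_forall_ne {i : Fin k} {W : List β} (hW : ∀ j, dollar j ∉ W) :
    keepDollar dollar i W = W :=
  List.filter_eq_self.2 fun _ hy => decide_eq_true fun j hj => absurd (hj ▸ hy) (hW j)

theorem count_keepDollar (hinj : Function.Injective dollar) (i : Fin k) (W : List β) :
    (keepDollar dollar i W).count (dollar i) = W.count (dollar i) :=
  List.count_filter (decide_eq_true fun _ hj => (hinj hj).symm)

theorem keepDollar_dollarWord (hinj : Function.Injective dollar) (J : Finset (Fin k)) (i : Fin k) :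
    keepDollar dollar i (dollarWord c dollar J) =
      if i ∈ J then List.replicate (2 * c) (dollar i) else [] := by
  have hfilter : keepDollar dollar i (dollarWord c dollar J) =
      (dollarWord c dollar J).filter (· = dollar i) := by
    refine List.filter_congr fun y hy => ?_
    obtain ⟨j, rfl⟩ := mem_range_of_mem_dollarWord hy
    simp [hinj.eq_iff]
  rw [hfilter, List.filter_eq, count_dollarWord hinj]
  split_ifs <;> rfl

theorem keepDollar_strPow_gadgetAminus (hinj : Function.Injective dollar) (i : Fin k) (f : ℕ) :
    keepDollar dollar i (strPow (gadgetAminus k c dollar i) f) = [] := by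
  rw [strPow_eq_flatMap_range, gadgetAminus_eq_dollarWord, keepDollar, List.filter_flatMap]
  have := keepDollar_dollarWord (c := c) hinj {i}ᶜ i
  simp_all [keepDollar]

theorem keepDollar_blockString (i : Fin k) (P : List β) (a t b : ℕ → List β) (S : List β) (n : ℕ) :
    keepDollar dollar i (blockString P a t b S n) =
      blockString (keepDollar dollar i P) (fun p => keepDollar dollar i (a p))
        (fun p => keepDollar dollar i (t p)) (fun p => keepDollar dollar i (b p))
        (keepDollar dollar i S) n :=
  filter_blockString _ P a t b S n

theorem keepDollar_gadgetAG (hfresh : FreshSymbols Sig dollar percent) {X : ℕ → List β}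
    (hX : ∀ q, ∀ y ∈ X q, y ∈ Sig) (i : Fin k) (f N : ℕ) :
    keepDollar dollar i (gadgetAG k c dollar percent i f (fun p : Fin N => X p)) =
      delimitedBlocks (dollar i) (2 * c) (fun q => X q ++ List.replicate (2 * c) percent) N := by
  have hX' : ∀ q, keepDollar dollar i (X q) = X q := fun q =>
    keepDollar_of_forall_ne fun j hj => hfresh.dollar_notMem j (hX q _ hj)
  have hB : keepDollar dollar i (List.replicate (2 * c) percent) = List.replicate (2 * c) percent :=
    keepDollar_of_forall_ne fun j hj => hfresh.dollar_ne_percent j (List.eq_of_mem_replicate hj)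
  rw [gadgetAG_eq_blockString, keepDollar_blockString, gadgetA_eq_dollarWord]
  simp only [keepDollar_strPow_gadgetAminus hfresh.dollar_injective,
    keepDollar_dollarWord hfresh.dollar_injective, hX', hB]
  simp [blockString, delimitedBlocks]

end AlignmentGadgets

section UpperBound

variable {β : Type*} {k c f M N : ℕ} {dollar : Fin k → β} {percent : β} {Sig : Set β}
  {P S : List β} {a t b X : ℕ → List β} {i : Fin k}

theorem sublist_append_replicate_iff {l W : List β} {n : ℕ} (hl : percent ∉ l) :
    l <+ W ++ List.replicate n percent ↔ l <+ W := by
  have hdisj := disjoint_of_forall_eq hl fun _ => List.eq_of_mem_replicate (n := n)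
  exact ⟨.of_sublist_append_left hdisj, fun h => h.trans (List.sublist_append_left _ _)⟩

theorem not_append_sublist_append_replicate {l l' W : List β} {y : β} (hW : percent ∉ W)
    (hl : percent ∈ l) (hl' : y ∈ l') (hy : y ≠ percent) (n : ℕ) :
    ¬ l ++ l' <+ W ++ List.replicate n percent := by
  intro h
  have hpair : [percent, y] <+ W ++ List.replicate n percent :=
    ((List.singleton_sublist.2 hl).append (List.singleton_sublist.2 hl')).trans h
  obtain ⟨_ | ⟨b, l₁⟩, l₂, heq, h₁, h₂⟩ := List.sublist_append_iff.1 hpair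
  · obtain rfl : [percent, y] = l₂ := heq
    exact hy (List.eq_of_mem_replicate (h₂.subset (by simp)))
  · obtain ⟨rfl, -⟩ := List.cons.inj heq
    exact hW (h₁.subset List.mem_cons_self)

theorem dollar_notMem_append_replicate (hfresh : FreshSymbols Sig dollar percent) {W : List β}
    (hW : ∀ y ∈ W, y ∈ Sig) (i : Fin k) (n : ℕ) : dollar i ∉ W ++ List.replicate n percent := by
  rw [List.mem_append, not_or]
  exact ⟨fun h => hfresh.dollar_notMem i (hW _ h),
    fun h => hfresh.dollar_ne_percent i (List.eq_of_mem_replicate h)⟩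

variable [DecidableEq β]

theorem count_dollar_gadgetAG (hfresh : FreshSymbols Sig dollar percent)
    (hX : ∀ q, ∀ y ∈ X q, y ∈ Sig) (i : Fin k) (f N : ℕ) :
    (gadgetAG k c dollar percent i f (fun p : Fin N => X p)).count (dollar i) = 2 * c * N := by
  rw [← count_keepDollar hfresh.dollar_injective, keepDollar_gadgetAG hfresh hX,
    count_delimitedBlocks fun q => dollar_notMem_append_replicate hfresh (hX q) i _]

theorem keepDollar_blockString_of_forall_mem (hfresh : FreshSymbols Sig dollar percent)
    (ht : ∀ p, ∀ y ∈ t p, y ∈ Sig) (i : Fin k) (P : List β) (a b : ℕ → List β) (S : List β)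
    (M : ℕ) :
    keepDollar dollar i (blockString P a t b S M) =
      blockString (keepDollar dollar i P) (fun p => keepDollar dollar i (a p)) t
        (fun p => keepDollar dollar i (b p)) (keepDollar dollar i S) M := by
  have ht' : ∀ p, keepDollar dollar i (t p) = t p := fun p =>
    keepDollar_of_forall_ne fun j hj => hfresh.dollar_notMem j (ht p _ hj)
  simp only [keepDollar_blockString, ht']

theorem keepDollar_sublist_keepDollar (dollar : Fin k → β) (i : Fin k) {W W' : List β}
    (h : W <+ W') : keepDollar dollar i W <+ keepDollar dollar i W' :=
  h.filter _

theorem count_dollar_add_sum_le (hfresh : FreshSymbols Sig dollar percent)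
    (hX : ∀ q, ∀ y ∈ X q, y ∈ Sig) (ht : ∀ p, ∀ y ∈ t p, y ∈ Sig) (hN : 0 < N)
    (hT : blockString P a t b S M <+ gadgetAG k c dollar percent i f (fun p : Fin N => X p)) :
    (blockString P a t b S M).count (dollar i) +
      ∑ p ∈ Finset.range M, (if ∃ q < N, t p <+ X q then 0 else 2 * c) ≤ 2 * c * N := by
  have hT' := keepDollar_sublist_keepDollar dollar i hT
  rw [keepDollar_gadgetAG hfresh hX, keepDollar_blockString_of_forall_mem hfresh ht] at hT'
  have hle := count_add_sum_le_of_blockString_sublist hN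
    (fun q => dollar_notMem_append_replicate hfresh (hX q) i _)
    (fun p hp => hfresh.dollar_notMem i (ht p _ hp)) hT'
  rw [← keepDollar_blockString_of_forall_mem hfresh ht,
    count_keepDollar hfresh.dollar_injective] at hle
  simpa only [sublist_append_replicate_iff fun hp => hfresh.percent_notMem (ht _ _ hp)] using hle

theorem exists_shift_of_count_dollar_eq (hfresh : FreshSymbols Sig dollar percent)
    (hX : ∀ q, ∀ y ∈ X q, y ∈ Sig) (ht : ∀ p, ∀ y ∈ t p, y ∈ Sig) (hc : 0 < c)
    (ha : ∀ p, a p <+ gadgetA k c dollar) (hb : ∀ p, ∀ y ∈ b p, y = percent)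
    (htne : ∀ p < M, t p ≠ []) (hbne : ∀ p < M, b p ≠ [])
    (hT : blockString P a t b S M <+ gadgetAG k c dollar percent i f (fun p : Fin N => X p))
    (hcount : (blockString P a t b S M).count (dollar i) = 2 * c * N) :
    ∃ s, s + M ≤ N ∧ ∀ p < M, t p <+ X (s + p) := by
  have hpercent : ∀ p, percent ∉ t p := fun p hp => hfresh.percent_notMem (ht p _ hp)
  have hb' : ∀ p, keepDollar dollar i (b p) = b p := fun p =>
    keepDollar_of_forall_ne fun j hj => hfresh.dollar_ne_percent j (hb p _ hj)
  have ha' : ∀ p, (keepDollar dollar i (a p)).count (dollar i) ≤ 2 * c := fun p => by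
    simpa [count_keepDollar hfresh.dollar_injective, gadgetA_eq_dollarWord,
      count_dollarWord hfresh.dollar_injective] using (ha p).count_le (dollar i)
  have hbt : ∀ p q, p + 1 < M → ¬ b p ++ t (p + 1) <+ X q ++ List.replicate (2 * c) percent := by
    intro p q hp
    obtain ⟨y, hy⟩ := List.exists_mem_of_ne_nil _ (htne (p + 1) hp)
    obtain ⟨y', hy'⟩ := List.exists_mem_of_ne_nil _ (hbne p (by omega))
    exact not_append_sublist_append_replicate (fun h => hfresh.percent_notMem (hX q _ h))
      (hb p y' hy' ▸ hy') hy (fun h => hpercent _ (h ▸ hy)) _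
  have hT' := keepDollar_sublist_keepDollar dollar i hT
  rw [keepDollar_gadgetAG hfresh hX, keepDollar_blockString_of_forall_mem hfresh ht] at hT'
  rw [← count_keepDollar hfresh.dollar_injective,
    keepDollar_blockString_of_forall_mem hfresh ht] at hcount
  obtain ⟨s, hs, hsub⟩ := exists_shift_of_blockString_sublist (by omega)
    (fun q => dollar_notMem_append_replicate hfresh (hX q) i _)
    (fun p hp => hfresh.dollar_notMem i (ht p _ hp))
    (fun p hp => hfresh.dollar_ne_percent i (hb p _ (hb' p ▸ hp))) ha' htne
    (by simpa only [hb'] using hbt) hT' hcount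
  exact ⟨s, hs, fun p hp => (sublist_append_replicate_iff (hpercent p)).1 (hsub p hp)⟩

theorem length_le_sum_count_add_countP (dollar : Fin k → β) (W : List β) :
    W.length ≤ ∑ j, W.count (dollar j) + W.countP fun y => ∀ j, y ≠ dollar j := by
  induction W with
  | nil => simp
  | cons y W ih =>
    have hy : 1 ≤ ∑ j, (if y = dollar j then 1 else 0) + if ∀ j, y ≠ dollar j then 1 else 0 := by
      by_cases h : ∃ j, y = dollar j
      · obtain ⟨j, hj⟩ := h
        have := Finset.single_le_sum (f := fun j => if y = dollar j then 1 else 0)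
          (fun _ _ => Nat.zero_le _) (Finset.mem_univ j)
        simp only [if_pos hj] at this
        omega
      · simp [not_exists.1 h]
    simp only [List.length_cons, List.count_cons, List.countP_cons, Finset.sum_add_distrib,
      beq_iff_eq, decide_eq_true_eq]
    omega

theorem length_blockString_le (hP : ∀ y ∈ P, y ∈ Set.range dollar)
    (ha : ∀ p, ∀ y ∈ a p, y ∈ Set.range dollar) (hS : ∀ y ∈ S, y ∈ Set.range dollar) :
    (blockString P a t b S M).length ≤ ∑ j, (blockString P a t b S M).count (dollar j) +
      ∑ p ∈ Finset.range M, ((t p).length + (b p).length) := by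
  refine (length_le_sum_count_add_countP dollar _).trans (Nat.add_le_add_left ?_ _)
  have hzero : ∀ W : List β, (∀ y ∈ W, y ∈ Set.range dollar) →
      W.countP (fun y => ∀ j, y ≠ dollar j) = 0 := by
    intro W hW
    rw [List.countP_eq_zero]
    intro y hy
    obtain ⟨j, hj⟩ := hW y hy
    simpa using ⟨j, hj.symm⟩
  rw [countP_blockString, hzero P hP, hzero S hS, zero_add, add_zero]
  refine Finset.sum_le_sum fun p _ => ?_
  rw [hzero _ (ha p), zero_add]
  exact Nat.add_le_add List.countP_le_length List.countP_le_length

/-- Double counting of the penalties `pen i p`, which are paid out of the budgets `A` of the rows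
`i` and refunded to the columns `p`. -/
theorem sum_add_sum_le_and_eq_of_le {ι κ : Type*} {I : Finset ι} {J : Finset κ} {A B r : ℕ}
    {cnt : ι → ℕ} {pen : ι → κ → ℕ} {u v : κ → ℕ} (hcnt : ∀ i ∈ I, cnt i + ∑ p ∈ J, pen i p ≤ A)
    (hu : ∀ p ∈ J, u p ≤ r + ∑ i ∈ I, pen i p) (hv : ∀ p ∈ J, v p ≤ B) :
    ∑ i ∈ I, cnt i + ∑ p ∈ J, (u p + v p) ≤ I.card * A + J.card * (r + B) ∧
      (∑ i ∈ I, cnt i + ∑ p ∈ J, (u p + v p) = I.card * A + J.card * (r + B) →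
        (∀ i ∈ I, cnt i + ∑ p ∈ J, pen i p = A) ∧
          ∀ p ∈ J, u p = r + ∑ i ∈ I, pen i p ∧ v p = B) := by
  have huv : ∀ p ∈ J, u p + v p ≤ r + ∑ i ∈ I, pen i p + B := fun p hp =>
    Nat.add_le_add (hu p hp) (hv p hp)
  have hrows := Finset.sum_le_sum hcnt
  have hcols := Finset.sum_le_sum huv
  have hcomm := Finset.sum_comm (s := I) (t := J) (f := pen)
  have hrows' := Finset.sum_eq_sum_iff_of_le hcnt
  have hcols' := Finset.sum_eq_sum_iff_of_le huv
  simp only [Finset.sum_add_distrib, Finset.sum_const, smul_eq_mul] at *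
  refine ⟨by linarith, fun heq => ⟨hrows'.1 (by linarith), fun p hp => ?_⟩⟩
  have := hcols'.1 (by linarith) p hp
  have := hu p hp
  have := hv p hp
  omega

theorem penalty_le_sum {K : ℕ} (X : Fin K → ℕ → List β) (t : List β) (c N : ℕ) (i : Fin K) :
    (if ∃ q < N, t <+ X i q then 0 else 2 * c) ≤
      ∑ i, if ∃ q < N, t <+ X i q then 0 else 2 * c :=
  Finset.single_le_sum (f := fun i => if ∃ q < N, t <+ X i q then 0 else 2 * c)
    (fun _ _ => Nat.zero_le _) (Finset.mem_univ i)

theorem length_le_add_sum_penalty {K r : ℕ} {X : Fin K → ℕ → List β} {t y : List β}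
    (ht : t <+ y) (hy : y.length ≤ c)
    (hrow : ∀ q : Fin K → ℕ, lcsLen (List.ofFn (fun i => X i (q i)) ++ [y]) ≤ r) (N : ℕ) :
    t.length ≤ r + ∑ i, if ∃ q < N, t <+ X i q then 0 else 2 * c := by
  by_cases h : ∀ i, ∃ q < N, t <+ X i q
  · choose q _ hq using h
    have hle := (le_lcsLen_ofFn_append_singleton_iff.2 ⟨t, rfl, hq, ht⟩).trans (hrow q)
    omega
  · obtain ⟨i, hi⟩ := not_forall.1 h
    have hpen := penalty_le_sum X t c N i
    have hlen := ht.length_le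
    rw [if_neg hi] at hpen
    omega

variable {K r : ℕ} {dollar : Fin (K + 1) → β} {X : Fin K → ℕ → List β} {Y : ℕ → List β}

/-- The delimiters `$_i` in a common subsequence are paid for by `AG_i`, except that each piece that
fits into no block of `AG_i` costs `2c` of them; this outweighs anything the piece can gain. -/
theorem length_blockString_le_of_sublist_gadgetAG (hfresh : FreshSymbols Sig dollar percent)
    (hX : ∀ i q, ∀ y ∈ X i q, y ∈ Sig) (hY : ∀ p, ∀ y ∈ Y p, y ∈ Sig)
    (hYlen : ∀ p, (Y p).length ≤ c)
    (hrow : ∀ p, ∀ q : Fin K → ℕ, lcsLen (List.ofFn (fun i => X i (q i)) ++ [Y p]) ≤ r)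
    (hN : 0 < N) (hP : ∀ y ∈ P, y ∈ Set.range dollar)
    (ha : ∀ p, ∀ y ∈ a p, y ∈ Set.range dollar) (ht : ∀ p, t p <+ Y p)
    (hb : ∀ p, (b p).length ≤ 2 * c) (hS : ∀ y ∈ S, y ∈ Set.range dollar)
    (hTX : ∀ i : Fin K, blockString P a t b S M <+
      gadgetAG (K + 1) c dollar percent i.castSucc f (fun p : Fin N => X i p))
    (hTY : blockString P a t b S M <+
      gadgetAG (K + 1) c dollar percent (Fin.last K) f (fun p : Fin M => Y p)) :
    (blockString P a t b S M).length ≤ 2 * c * (2 * M + K * N) + r * M ∧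
      ((blockString P a t b S M).length = 2 * c * (2 * M + K * N) + r * M →
        (∀ i : Fin K, (blockString P a t b S M).count (dollar i.castSucc) +
          ∑ p ∈ Finset.range M, (if ∃ q < N, t p <+ X i q then 0 else 2 * c) = 2 * c * N) ∧
        ∀ p < M, (t p).length = r + ∑ i, (if ∃ q < N, t p <+ X i q then 0 else 2 * c) ∧
          (b p).length = 2 * c) := by
  have hlast := hTY.count_le (dollar (Fin.last K))
  rw [count_dollar_gadgetAG hfresh hY] at hlast
  have hlen := length_blockString_le (M := M) (t := t) (b := b) hP ha hS
  rw [Fin.sum_univ_castSucc] at hlen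
  have htSig : ∀ p, ∀ y ∈ t p, y ∈ Sig := fun p y hy => hY p y ((ht p).subset hy)
  obtain ⟨hle, heq⟩ := sum_add_sum_le_and_eq_of_le (J := Finset.range M)
    (fun i _ => count_dollar_add_sum_le hfresh (hX i) htSig hN (hTX i))
    (fun p _ => length_le_add_sum_penalty (ht p) (hYlen p) (hrow p) N) (fun p _ => hb p)
  simp only [Finset.card_univ, Fintype.card_fin, Finset.card_range, Finset.mem_univ,
    Finset.mem_range, true_implies] at hle heq
  exact ⟨by linarith, fun hT => heq (by linarith)⟩

end UpperBound

section AlignmentValue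

variable {β : Type*} {k c f M N : ℕ} {percent : β} {Sig : Set β}

section Fit

variable {dollar : Fin k → β} {X : ℕ → List β} {i : Fin k}

theorem gadgetAG_eq_blockString_window (k c : ℕ) (dollar : Fin k → β) (percent : β) (i : Fin k)
    (f s M u : ℕ) (X : ℕ → List β) :
    gadgetAG k c dollar percent i f (fun p : Fin (s + M + u) => X p) =
      blockString
        (strPow (gadgetAminus k c dollar i) f ++ (List.range s).flatMap fun q =>
          gadgetA k c dollar ++ X q ++ List.replicate (2 * c) percent)
        (fun _ => gadgetA k c dollar) (fun p => X (s + p))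
        (fun _ => List.replicate (2 * c) percent)
        (((List.range u).flatMap fun q =>
          gadgetA k c dollar ++ X (s + M + q) ++ List.replicate (2 * c) percent) ++
            strPow (gadgetAminus k c dollar i) f) M := by
  simp only [gadgetAG_eq_blockString, blockString, List.range_add, List.flatMap_append,
    List.flatMap_map, List.append_assoc]

theorem flatMap_dollarWord_sublist_strPow {J : ℕ → Finset (Fin k)} {n : ℕ}
    (hJ : ∀ τ < n, i ∉ J τ) (hn : n ≤ f) :
    ((List.range n).flatMap fun τ => dollarWord c dollar (J τ)) <+
      strPow (gadgetAminus k c dollar i) f := by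
  rw [strPow_eq_flatMap_range, gadgetAminus_eq_dollarWord]
  refine (List.Sublist.flatMap_right _ fun τ hτ => dollarWord_sublist_dollarWord ?_).trans
    ((List.range_sublist.2 hn).flatMap _)
  simpa [Finset.subset_compl_singleton] using hJ τ (List.mem_range.1 hτ)

theorem flatMap_dollarWord_sublist_flatMap_block (c : ℕ) (dollar : Fin k → β)
    (J : ℕ → Finset (Fin k)) (W : ℕ → List β) (percent : β) (n : ℕ) :
    ((List.range n).flatMap fun τ => dollarWord c dollar (J τ)) <+
      (List.range n).flatMap fun q =>
        gadgetA k c dollar ++ W q ++ List.replicate (2 * c) percent := by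
  refine List.Sublist.flatMap_right _ fun τ _ => ?_
  rw [gadgetA_eq_dollarWord, List.append_assoc]
  exact (dollarWord_sublist_dollarWord (Finset.subset_univ _)).trans (List.sublist_append_left _ _)

/-- The outer delimiter words of the alignment string: those in front that contain `$_i` are matched
to the `s` unused blocks on the left, those behind to the `f - s` unused blocks on the right, and
the rest to copies of `A_{-i}`. -/
theorem blockString_sublist_gadgetAG {I J : ℕ → Finset (Fin k)} {w : ℕ → List β} {s : ℕ}
    (hs : s ≤ f) (hI : ∀ τ, τ + s < f → i ∉ I τ) (hJ : ∀ τ, f ≤ τ + s → i ∉ J τ)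
    (hw : ∀ p, w p <+ X (s + p)) :
    blockString ((List.range f).flatMap fun τ => dollarWord c dollar (I τ))
        (fun _ => gadgetA k c dollar) w (fun _ => List.replicate (2 * c) percent)
        ((List.range f).flatMap fun τ => dollarWord c dollar (J τ)) M <+
      gadgetAG k c dollar percent i f (fun p : Fin (M + f) => X p) := by
  obtain ⟨u, rfl⟩ := Nat.exists_eq_add_of_le' hs
  have hN : M + (u + s) = s + M + u := by ring
  rw [hN, gadgetAG_eq_blockString_window]
  refine blockString_sublist_blockString ?_ (fun _ => .refl _) hw (fun _ => .refl _) ?_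
  · rw [List.range_add, List.flatMap_append, List.flatMap_map]
    exact (flatMap_dollarWord_sublist_strPow (fun τ hτ => hI τ (by omega)) (by omega)).append
      (flatMap_dollarWord_sublist_flatMap_block c dollar _ X percent s)
  · rw [List.range_add, List.flatMap_append, List.flatMap_map]
    exact (flatMap_dollarWord_sublist_flatMap_block c dollar J _ percent u).append
      (flatMap_dollarWord_sublist_strPow (fun τ _ => hJ (u + τ) (by omega)) (by omega))

end Fit

variable {K r : ℕ} {dollar : Fin (K + 1) → β} {X : Fin K → ℕ → List β} {Y : ℕ → List β}

theorem length_flatMap_range (F : ℕ → List β) (n : ℕ) :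
    ((List.range n).flatMap F).length = ∑ p ∈ Finset.range n, (F p).length :=
  List.length_flatMap

/-- The common subsequence that aligns the blocks of the `Y`-gadget, reduced to the pieces `w p`,
with consecutive blocks of the other gadgets. In front and behind, it uses up the remaining
delimiters `$_i` of the other gadgets: the `τ`-th ones come in front if `i ∈ I τ`, else behind. -/
def alignmentString {β : Type*} {K : ℕ} (c : ℕ) (dollar : Fin (K + 1) → β) (percent : β) (f : ℕ)
    (I : ℕ → Finset (Fin K)) (w : ℕ → List β) (M : ℕ) : List β :=
  blockString ((List.range f).flatMap fun τ => dollarWord c dollar ((I τ).map Fin.castSuccEmb))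
    (fun _ => gadgetA (K + 1) c dollar) w (fun _ => List.replicate (2 * c) percent)
    ((List.range f).flatMap fun τ => dollarWord c dollar ((I τ)ᶜ.map Fin.castSuccEmb)) M

theorem length_alignmentString (dollar : Fin (K + 1) → β) (percent : β) (I : ℕ → Finset (Fin K))
    {w : ℕ → List β} (hw : ∀ p < M, (w p).length = r) :
    (alignmentString c dollar percent f I w M).length =
      2 * c * (2 * M + K * (M + f)) + r * M := by
  have hcard : ∀ τ, (I τ).card + (I τ)ᶜ.card = K := fun τ => by
    rw [Finset.card_add_card_compl, Fintype.card_fin]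
  have houter : ∑ τ ∈ Finset.range f, 2 * c * (I τ).card +
      ∑ τ ∈ Finset.range f, 2 * c * (I τ)ᶜ.card = 2 * c * (K * f) := by
    simp only [← Finset.sum_add_distrib, ← mul_add, hcard, Finset.sum_const, Finset.card_range,
      smul_eq_mul]
    ring
  have hblocks : ∑ p ∈ Finset.range M, (2 * c * (K + 1) + (w p).length + 2 * c) =
      M * (2 * c * (K + 1) + r + 2 * c) := by
    rw [Finset.sum_congr rfl fun p hp => by rw [hw p (Finset.mem_range.1 hp)]]
    simp
  simp only [alignmentString, blockString, List.length_append, length_flatMap_range,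
    gadgetA_eq_dollarWord, length_dollarWord, Finset.card_map, Finset.card_univ, Fintype.card_fin,
    List.length_replicate, hblocks]
  linarith

theorem exists_sublist_gadgetAG_of_shift (dollar : Fin (K + 1) → β) (percent : β) {s : Fin K → ℕ}
    (hs : ∀ i, s i ≤ f)
    (hrow : ∀ p < M, r ≤ lcsLen (List.ofFn (fun i => X i (s i + p)) ++ [Y p])) :
    ∃ T : List β, T.length = 2 * c * (2 * M + K * (M + f)) + r * M ∧
      (∀ i : Fin K,
        T <+ gadgetAG (K + 1) c dollar percent i.castSucc f (fun p : Fin (M + f) => X i p)) ∧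
      T <+ gadgetAG (K + 1) c dollar percent (Fin.last K) f (fun p : Fin M => Y p) := by
  have hpiece : ∀ p, ∃ w : List β, (p < M → w.length = r) ∧ (∀ i, w <+ X i (s i + p)) ∧
      w <+ Y p := by
    intro p
    by_cases hp : p < M
    · obtain ⟨w, hlen, hw⟩ := le_lcsLen_ofFn_append_singleton_iff.1 (hrow p hp)
      exact ⟨w, fun _ => hlen, hw⟩
    · exact ⟨[], fun h => absurd h hp, fun _ => List.nil_sublist _, List.nil_sublist _⟩
  choose w hlen hwX hwY using hpiece
  refine ⟨alignmentString c dollar percent f (fun τ => {i | f ≤ τ + s i}) w M,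
    length_alignmentString dollar percent _ hlen, fun i => ?_, ?_⟩
  · exact blockString_sublist_gadgetAG (hs i) (fun τ hτ => by simpa using hτ)
      (fun τ hτ => by simpa using hτ) fun p => hwX p i
  · rw [gadgetAG_eq_blockString]
    exact blockString_sublist_blockString
      (flatMap_dollarWord_sublist_strPow (fun τ _ => by simp) le_rfl) (fun _ => .refl _) hwY
      (fun _ => .refl _) (flatMap_dollarWord_sublist_strPow (fun τ _ => by simp) le_rfl)

theorem length_le_and_exists_shift_of_sublist_gadgetAG (hfresh : FreshSymbols Sig dollar percent)
    (hX : ∀ i q, ∀ y ∈ X i q, y ∈ Sig) (hY : ∀ p, ∀ y ∈ Y p, y ∈ Sig)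
    (hYlen : ∀ p, (Y p).length ≤ c)
    (hrow : ∀ p, ∀ q : Fin K → ℕ, lcsLen (List.ofFn (fun i => X i (q i)) ++ [Y p]) ≤ r)
    (hr : 0 < r) (hM : 0 < M) (hN : 0 < N) {T : List β}
    (hTX : ∀ i : Fin K,
      T <+ gadgetAG (K + 1) c dollar percent i.castSucc f (fun p : Fin N => X i p))
    (hTY : T <+ gadgetAG (K + 1) c dollar percent (Fin.last K) f (fun p : Fin M => Y p)) :
    T.length ≤ 2 * c * (2 * M + K * N) + r * M ∧
      (T.length = 2 * c * (2 * M + K * N) + r * M → ∃ s : Fin K → ℕ, (∀ i, s i + M ≤ N) ∧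
        ∀ p < M, r ≤ lcsLen (List.ofFn (fun i => X i (s i + p)) ++ [Y p])) := by
  classical
  obtain ⟨P, a, t, b, S, rfl, hP, ha, ht, hb, hS⟩ :=
    exists_eq_blockString_of_sublist (gadgetAG_eq_blockString _ _ _ _ _ _ _ Y ▸ hTY)
  have hblen : ∀ p, (b p).length ≤ 2 * c := fun p => by simpa using (hb p).length_le
  obtain ⟨hle, htight⟩ := length_blockString_le_of_sublist_gadgetAG hfresh hX hY hYlen hrow hN
    (fun y hy => mem_range_of_mem_strPow_gadgetAminus (hP.subset hy))
    (fun p y hy => mem_range_of_mem_gadgetA ((ha p).subset hy)) ht hblen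
    (fun y hy => mem_range_of_mem_strPow_gadgetAminus (hS.subset hy)) hTX hTY
  refine ⟨hle, fun hT => ?_⟩
  obtain ⟨hcount, hpiece⟩ := htight hT
  have htlen : ∀ p, (t p).length ≤ c := fun p => (ht p).length_le.trans (hYlen p)
  have hc : 0 < c := by have := (hpiece 0 hM).1; have := htlen 0; omega
  have hpen : ∀ p < M, ∀ i, (if ∃ q < N, t p <+ X i q then 0 else 2 * c) = 0 := by
    intro p hp i
    have := penalty_le_sum X (t p) c N i
    have := (hpiece p hp).1
    have := htlen p
    split_ifs at * <;> omega
  have hlen : ∀ p < M, (t p).length = r := fun p hp => by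
    rw [(hpiece p hp).1, Finset.sum_eq_zero fun i _ => hpen p hp i, add_zero]
  have hshift : ∀ i, ∃ s, s + M ≤ N ∧ ∀ p < M, t p <+ X i (s + p) := by
    intro i
    have hcount' := hcount i
    rw [Finset.sum_eq_zero fun p hp => hpen p (Finset.mem_range.1 hp) i, add_zero] at hcount'
    exact exists_shift_of_count_dollar_eq hfresh (hX i) (fun p y hy => hY p y ((ht p).subset hy))
      hc ha (fun p y hy => List.eq_of_mem_replicate ((hb p).subset hy))
      (fun p hp => List.ne_nil_of_length_pos (by rw [hlen p hp]; exact hr))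
      (fun p hp => List.ne_nil_of_length_pos (by rw [(hpiece p hp).2]; omega)) (hTX i) hcount'
  choose s hs hsub using hshift
  exact ⟨s, hs, fun p hp =>
    le_lcsLen_ofFn_append_singleton_iff.2 ⟨t p, hlen p hp, fun i => hsub i p hp, ht p⟩⟩

theorem notMem_gadgetAG {dollar : Fin k → β} {x : β} (hdollar : ∀ j, dollar j ≠ x)
    (hpercent : percent ≠ x) (hxSig : x ∉ Sig) {X : ℕ → List β} (hX : ∀ q, ∀ y ∈ X q, y ∈ Sig)
    (i : Fin k) : x ∉ gadgetAG k c dollar percent i f (fun p : Fin N => X p) := by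
  have hrange : x ∉ Set.range dollar := fun ⟨j, hj⟩ => hdollar j hj
  simp only [gadgetAG_eq_blockString, blockString, List.mem_append, List.mem_flatMap]
  rintro ((hx | ⟨q, -, (hx | hx) | hx⟩) | hx)
  · exact hrange (mem_range_of_mem_strPow_gadgetAminus hx)
  · exact hrange (mem_range_of_mem_gadgetA hx)
  · exact hxSig (hX q x hx)
  · exact hpercent (List.eq_of_mem_replicate hx).symm
  · exact hrange (mem_range_of_mem_strPow_gadgetAminus hx)

theorem lcsLen_gadgetSAG_eq_max {atSym : β} (hdollar : ∀ j, dollar j ≠ atSym)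
    (hpercent : percent ≠ atSym) (hatSym : atSym ∉ Sig) (hX : ∀ i q, ∀ y ∈ X i q, y ∈ Sig)
    (hY : ∀ p, ∀ y ∈ Y p, y ∈ Sig) (hK : 0 < K) (D f N M : ℕ) :
    lcsLen
      (List.ofFn (fun i : Fin K => gadgetSAGx (K + 1) c dollar percent atSym D i.castSucc f
        (fun p : Fin N => X i p)) ++
        [gadgetSAGy (K + 1) c dollar percent atSym D (Fin.last K) f (fun p : Fin M => Y p)]) =
      max (D - 1) (lcsLen
        (List.ofFn (fun i : Fin K =>
          gadgetAG (K + 1) c dollar percent i.castSucc f (fun p : Fin N => X i p)) ++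
          [gadgetAG (K + 1) c dollar percent (Fin.last K) f (fun p : Fin M => Y p)])) :=
  lcsLen_replicate_append hK
    (fun i => notMem_gadgetAG hdollar hpercent hatSym (hX i) i.castSucc)
    (notMem_gadgetAG hdollar hpercent hatSym hY (Fin.last K)) (D - 1)

theorem lcsLen_gadgetSAG (hfresh : FreshSymbols Sig dollar percent) {atSym : β}
    (hdollar : ∀ j, dollar j ≠ atSym) (hpercent : percent ≠ atSym) (hatSym : atSym ∉ Sig)
    (hX : ∀ i q, ∀ y ∈ X i q, y ∈ Sig) (hY : ∀ p, ∀ y ∈ Y p, y ∈ Sig)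
    (hYlen : ∀ p, (Y p).length ≤ c)
    (hrow : ∀ p, ∀ q : Fin K → ℕ, lcsLen (List.ofFn (fun i => X i (q i)) ++ [Y p]) ≤ r)
    (hK : 0 < K) (hr : 0 < r) (hM : 0 < M) (hMN : M ≤ N) {D : ℕ}
    (hD : D = 2 * c * (2 * M + K * N) + r * M) :
    let V := lcsLen
      (List.ofFn (fun i : Fin K => gadgetSAGx (K + 1) c dollar percent atSym D i.castSucc (N - M)
        (fun p : Fin N => X i p)) ++
        [gadgetSAGy (K + 1) c dollar percent atSym D (Fin.last K) (N - M) (fun p : Fin M => Y p)])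
    let Aligned := ∃ s : Fin K → ℕ, (∀ i, s i ≤ N - M) ∧
      ∀ p < M, r ≤ lcsLen (List.ofFn (fun i => X i (s i + p)) ++ [Y p])
    (Aligned → V = D) ∧ (¬ Aligned → V = D - 1) := by
  obtain ⟨f, rfl⟩ := Nat.exists_eq_add_of_le hMN
  rw [Nat.add_sub_cancel_left]
  intro V Aligned
  obtain ⟨T, hT, hTX, hTY⟩ := le_lcsLen_ofFn_append_singleton_iff.1 (le_refl (lcsLen
    (List.ofFn (fun i : Fin K => gadgetAG (K + 1) c dollar percent i.castSucc f
      (fun p : Fin (M + f) => X i p)) ++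
      [gadgetAG (K + 1) c dollar percent (Fin.last K) f (fun p : Fin M => Y p)])))
  obtain ⟨hle, htight⟩ := length_le_and_exists_shift_of_sublist_gadgetAG hfresh hX hY hYlen hrow
    hr hM (by omega) hTX hTY
  rw [← hD] at hle htight
  have hV : V = max (D - 1) T.length := by
    rw [hT]
    exact lcsLen_gadgetSAG_eq_max hdollar hpercent hatSym hX hY hK D f (M + f) M
  rw [hV]
  constructor
  · rintro ⟨s, hs, hrows⟩
    have hge := le_lcsLen_ofFn_append_singleton_iff.2
      (exists_sublist_gadgetAG_of_shift (c := c) dollar percent hs hrows)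
    rw [← hD, ← hT] at hge
    omega
  · intro h
    have hne : T.length ≠ D := fun heq => by
      obtain ⟨s, hs, hrows⟩ := htight heq
      exact h ⟨s, fun i => by have := hs i; omega, hrows⟩
    omega

end AlignmentValue

section InterleaveGadget

variable {n d ℓ : ℕ}

theorem vecS_add_mul (hn : 0 < n) (L : Fin n → Fin d → Bool) (u : Fin d → Bool) {j : ℕ}
    (hj : j < n ^ ℓ) (h : Fin d) :
    vecS n d ℓ hn L u (j + n ^ ℓ * h) = (listLProd n d ℓ hn L j h && u h) := by
  have hdiv : (j + n ^ ℓ * h) / n ^ ℓ = h := by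
    rw [Nat.add_mul_div_left _ _ (by positivity), Nat.div_eq_of_lt hj, zero_add]
  simp [vecS, hdiv, Nat.mod_eq_of_lt hj]

theorem vecE_eq_true_iff (hn : 0 < n) (u : Fin d → Bool) (p : ℕ) :
    vecE n d ℓ u p = true ↔ ∃ h : Fin d, p = n ^ ℓ * h ∧ u h = true := by
  constructor
  · intro hp
    unfold vecE at hp
    split_ifs at hp with hlt hmod
    exact ⟨⟨p / n ^ ℓ, hlt⟩, (Nat.mul_div_cancel' (Nat.dvd_of_mod_eq_zero hmod)).symm, hp⟩
  · rintro ⟨h, rfl, hu⟩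
    simpa [vecE, Nat.mul_div_cancel_left _ (pow_pos hn ℓ)] using hu

theorem exists_shift_vecS_iff {ι : Type*} (hn : 0 < n) (hd : 0 < d) (L : Fin n → Fin d → Bool)
    (u : Fin d → Bool) (v : ι → Fin d → Bool) :
    (∃ s : ι → ℕ, (∀ i, s i ≤ d * n ^ ℓ - ((d - 1) * n ^ ℓ + 1)) ∧
        ∀ p < (d - 1) * n ^ ℓ + 1,
          ¬ (vecE n d ℓ u p = true ∧ ∀ i, vecS n d ℓ hn L (v i) (s i + p) = true)) ↔
      ∃ js : ι → ℕ, (∀ i, js i < n ^ ℓ) ∧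
        ∀ h, ¬ (u h = true ∧ ∀ i, listLProd n d ℓ hn L (js i) h = true ∧ v i h = true) := by
  have hpow : 0 < n ^ ℓ := by positivity
  have hle : n ^ ℓ ≤ d * n ^ ℓ := Nat.le_mul_of_pos_left _ hd
  refine exists_congr fun s => ?_
  have hs : (∀ i, s i ≤ d * n ^ ℓ - ((d - 1) * n ^ ℓ + 1)) ↔ ∀ i, s i < n ^ ℓ :=
    forall_congr' fun i => by rw [Nat.sub_one_mul]; omega
  rw [hs]
  refine and_congr_right fun hs => ?_
  have hvec : ∀ (h : Fin d) i, vecS n d ℓ hn L (v i) (s i + n ^ ℓ * h) = true ↔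
      listLProd n d ℓ hn L (s i) h = true ∧ v i h = true := fun h i => by
    rw [vecS_add_mul hn L _ (hs i), Bool.and_eq_true]
  constructor
  · rintro hp h ⟨hu, hL⟩
    have hlt : n ^ ℓ * h < (d - 1) * n ^ ℓ + 1 := by
      rw [mul_comm]
      exact Nat.lt_succ_of_le (Nat.mul_le_mul_right _ (by omega))
    exact hp _ hlt ⟨(vecE_eq_true_iff hn u _).2 ⟨h, rfl, hu⟩, fun i => (hvec h i).2 (hL i)⟩
  · rintro horth p - ⟨hE, hS⟩
    obtain ⟨h, rfl, hu⟩ := (vecE_eq_true_iff hn u p).1 hE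
    exact horth h ⟨hu, fun i => (hvec h i).1 (hS i)⟩

theorem lcsLen_ofFn_castSucc_append_singleton {β : Type*} {K z : ℕ}
    {CG : Fin (K + 1) → Bool → List β}
    (hCG : ∀ b : Fin (K + 1) → Bool,
      lcsLen (List.ofFn fun i => CG i (b i)) = if ∀ i, b i = true then z else z + 1)
    (b : Fin K → Bool) (b' : Bool) :
    lcsLen (List.ofFn (fun i => CG i.castSucc (b i)) ++ [CG (Fin.last K) b']) =
      if b' = true ∧ ∀ i, b i = true then z else z + 1 := by
  simpa only [List.ofFn_succ', List.concat_eq_append, Fin.forall_fin_succ', Fin.snoc_castSucc,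
    Fin.snoc_last, and_comm] using hCG (Fin.snoc b b')

theorem succ_le_lcsLen_ofFn_castSucc_append_singleton_iff {β : Type*} {K z : ℕ}
    {CG : Fin (K + 1) → Bool → List β}
    (hCG : ∀ b : Fin (K + 1) → Bool,
      lcsLen (List.ofFn fun i => CG i (b i)) = if ∀ i, b i = true then z else z + 1)
    (b : Fin K → Bool) (b' : Bool) :
    z + 1 ≤ lcsLen (List.ofFn (fun i => CG i.castSucc (b i)) ++ [CG (Fin.last K) b']) ↔
      ¬ (b' = true ∧ ∀ i, b i = true) := by
  rw [lcsLen_ofFn_castSucc_append_singleton hCG]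
  split_ifs with h <;> simp [h]

end InterleaveGadget

/-- the interleave gadget, Lemma `interleaveGadget`. -/
theorem interleave_gadget
    {β : Type*} (k ℓ n d : ℕ) (hk : 2 ≤ k) (hℓ : 1 ≤ ℓ) (hn : 2 ≤ n) (hd : 1 ≤ d)
    (L : Fin n → Fin d → Bool) (v : Fin k → Fin d → Bool)
    (Sig : Set β) (CG : Fin k → Bool → List β) (c : ℕ)
    (hCGlen : ∀ i b, (CG i b).length = c)
    (hCGin : ∀ i b, ∀ ch ∈ CG i b, ch ∈ Sig)
    (z : ℕ)
    (hCG : ∀ b : Fin k → Bool,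
      lcsLen (List.ofFn fun i => CG i (b i)) = if ∀ i, b i = true then z else z + 1)
    (dollar : Fin k → β) (percent atSym : β)
    (hdinj : Function.Injective dollar)
    (hdp : ∀ i, dollar i ≠ percent) (hda : ∀ i, dollar i ≠ atSym) (hpa : percent ≠ atSym)
    (hdS : ∀ i, dollar i ∉ Sig) (hpS : percent ∉ Sig) (haS : atSym ∉ Sig)
    (C : ℕ)
    (hC : C = 2 * c * (2 * ((d - 1) * n ^ ℓ + 1) + (k - 1) * (d * n ^ ℓ))
        + (z + 1) * ((d - 1) * n ^ ℓ + 1)) :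
    let f : ℕ := d * n ^ ℓ - ((d - 1) * n ^ ℓ + 1)
    let IVG : Fin (k - 1) → List β := fun i =>
      gadgetSAGx k c dollar percent atSym C (i.castLE (Nat.sub_le k 1)) f
        (fun p : Fin (d * n ^ ℓ) =>
          CG (i.castLE (Nat.sub_le k 1))
            (vecS n d ℓ (by omega) L (v (i.castLE (Nat.sub_le k 1))) p))
    let EIVG : List β :=
      gadgetSAGy k c dollar percent atSym C ⟨k - 1, by omega⟩ f
        (fun p : Fin ((d - 1) * n ^ ℓ + 1) =>
          CG ⟨k - 1, by omega⟩ (vecE n d ℓ (v ⟨k - 1, by omega⟩) p))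
    let Orth : Prop := ∃ js : Fin (k - 1) → ℕ, (∀ i, js i < n ^ ℓ) ∧
      ∀ h : Fin d, ¬ (v ⟨k - 1, by omega⟩ h = true ∧
        ∀ i : Fin (k - 1),
          listLProd n d ℓ (by omega) L (js i) h = true ∧
            v (i.castLE (Nat.sub_le k 1)) h = true)
    (Orth → lcsLen (List.ofFn IVG ++ [EIVG]) = C) ∧
    (¬ Orth → lcsLen (List.ofFn IVG ++ [EIVG]) = C - 1) := by
  obtain ⟨K, rfl⟩ : ∃ K, k = K + 1 := ⟨k - 1, by omega⟩
  have hMN : (d - 1) * n ^ ℓ + 1 ≤ d * n ^ ℓ := by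
    have hpow : 0 < n ^ ℓ := by positivity
    have hle : n ^ ℓ ≤ d * n ^ ℓ := Nat.le_mul_of_pos_left _ hd
    rw [Nat.sub_one_mul]
    omega
  have hrow : ∀ (b : Fin K → Bool) (b' : Bool),
      lcsLen (List.ofFn (fun i => CG i.castSucc (b i)) ++ [CG (Fin.last K) b']) ≤ z + 1 := by
    intro b b'
    rw [lcsLen_ofFn_castSucc_append_singleton hCG]
    split_ifs <;> omega
  have hvalue := lcsLen_gadgetSAG (r := z + 1) (M := (d - 1) * n ^ ℓ + 1)
    (X := fun i q => CG i.castSucc (vecS n d ℓ (by omega) L (v i.castSucc) q))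
    (Y := fun p => CG (Fin.last K) (vecE n d ℓ (v (Fin.last K)) p))
    ⟨hdinj, hdp, hdS, hpS⟩ hda hpa haS (fun _ _ => hCGin _ _) (fun _ => hCGin _ _)
    (fun _ => (hCGlen _ _).le) (fun _ _ => hrow _ _) (by omega) z.succ_pos (Nat.succ_pos _) hMN hC
  simp only [succ_le_lcsLen_ofFn_castSucc_append_singleton_iff hCG,
    exists_shift_vecS_iff (by omega : 0 < n) hd] at hvalue
  exact hvalue
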